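/- arXiv:0903.1393 — 2 statements merged into one kernel-verified Lean document; each statement's English description precedes it below -/
import Mathlib

section
/- Let p and q be nonnegative rational numbers, neither of which is an integer. Then there exists a natural number n such that ⌊n·p + n·q⌋ > ⌊n·p⌋ + ⌊n·q⌋. -/
/-! Let `{x}` denote the fractional part of `x`; the claim for `n` is that `{np} + {nq} ≥ 1`. If
`{p} + {q} ≥ 1`, take `n = 1`. Otherwise take `n = d - 1` with `d` a positive common denominator
of `p` and `q`: then `np ≡ -p` and `nq ≡ -q` modulo `ℤ`, and since neither is an integer,
`{np} + {nq} = (1 - {p}) + (1 - {q}) > 1`. -/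

lemma floor_lt_of_not_int (x : ℚ) (hx : ¬ ∃ z : ℤ, x = z) : (⌊x⌋ : ℚ) < x :=
  lt_of_le_of_ne (Int.floor_le x) fun h => hx ⟨⌊x⌋, h.symm⟩

/-- Let `p` and `q` be nonnegative rational numbers, neither of which is an integer.
Then there exists a natural number `n` such that `⌊n·p + n·q⌋ > ⌊n·p⌋ + ⌊n·q⌋`. -/
theorem stmt_0 (p q : ℚ) (hp : 0 ≤ p) (hq : 0 ≤ q)
    (hpz : ¬ ∃ z : ℤ, p = z) (hqz : ¬ ∃ z : ℤ, q = z) :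
    ∃ n : ℕ, ⌊(n : ℚ) * p + (n : ℚ) * q⌋ > ⌊(n : ℚ) * p⌋ + ⌊(n : ℚ) * q⌋ := by
  by_cases h : (⌊p⌋ : ℚ) + ⌊q⌋ + 1 ≤ p + q
  · refine ⟨1, ?_⟩
    have h1 : ⌊p⌋ + ⌊q⌋ + 1 ≤ ⌊p + q⌋ := Int.le_floor.2 (by push_cast; exact h)
    simp only [Nat.cast_one, one_mul]
    lia
  · have hp' := floor_lt_of_not_int p hpz
    have hq' := floor_lt_of_not_int q hqz
    have hd : 1 ≤ p.den * q.den := Nat.mul_pos p.pos q.pos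
    refine ⟨p.den * q.den - 1, ?_⟩
    have hP : p * p.den = p.num := Rat.mul_den_eq_num p
    have hQ : q * q.den = q.num := Rat.mul_den_eq_num q
    have e1 : ((p.den * q.den - 1 : ℕ) : ℚ) * p = ((p.num * q.den : ℤ) : ℚ) - p := by
      push_cast [Nat.cast_sub hd]
      rw [← hP]; ring
    have e2 : ((p.den * q.den - 1 : ℕ) : ℚ) * q = ((q.num * p.den : ℤ) : ℚ) - q := by
      push_cast [Nat.cast_sub hd]
      rw [← hQ]; ring
    rw [e1, e2]
    generalize p.num * (q.den : ℤ) = A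
    generalize q.num * (p.den : ℤ) = B
    have f1 : ⌊(A : ℚ) - p⌋ < A - ⌊p⌋ := Int.floor_lt.2 (by push_cast; linarith)
    have f2 : ⌊(B : ℚ) - q⌋ < B - ⌊q⌋ := Int.floor_lt.2 (by push_cast; linarith)
    have f3 : A + B - ⌊p⌋ - ⌊q⌋ - 1 ≤ ⌊(A : ℚ) - p + (B - q)⌋ :=
      Int.le_floor.2 (by push_cast; linarith)
    lia
end

section
/- Let r be a natural number and let a₀, …, a_r be nonnegative rational numbers. Then the equality ⌊n·(a₀ + ⋯ + a_r)⌋ = ⌊n·a₀⌋ + ⋯ + ⌊n·a_r⌋ holds for every natural number n if and only if at most one of the aₛ is not an integer. -/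
/-!
For rationals `x s`, the floor is additive on `∑ s, x s` exactly when the fractional parts add up
to less than `1` (`floor_sum_eq_iff`). If at most one `a s` is not an integer, then for each `n` at
most one `n * a s` has a nonzero fractional part, so the criterion holds. Conversely, suppose
`a i` and `a j` are not integers, with `i ≠ j`, and let `N` be a positive common multiple of their
denominators. The criterion for `n = 1` gives `fract (a i) + fract (a j) < 1`; for `n = N - 1`,
where `n * a i` is congruent to `-a i` modulo `1`, it gives
`(1 - fract (a i)) + (1 - fract (a j)) < 1`. These two inequalities contradict each other.
-/

theorem floor_sum_eq_iff {ι : Type*} [Fintype ι] (x : ι → ℚ) :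
    ⌊∑ s, x s⌋ = ∑ s, ⌊x s⌋ ↔ ∑ s, Int.fract (x s) < 1 := by
  have h : ∑ s, x s = ((∑ s, ⌊x s⌋ : ℤ) : ℚ) + ∑ s, Int.fract (x s) := by
    push_cast
    rw [← Finset.sum_add_distrib]
    exact Finset.sum_congr rfl fun s _ => (Int.floor_add_fract (x s)).symm
  have h0 : 0 ≤ ∑ s, Int.fract (x s) := Finset.sum_nonneg fun s _ => Int.fract_nonneg _
  rw [Int.floor_eq_iff, h]
  constructor
  · rintro ⟨-, h2⟩
    linarith
  · intro h1
    constructor <;> linarith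

theorem fract_add_fract_le_sum {ι : Type*} [Fintype ι] (x : ι → ℚ) {i j : ι} (hij : i ≠ j) :
    Int.fract (x i) + Int.fract (x j) ≤ ∑ s, Int.fract (x s) := by
  classical
  rw [← Finset.sum_pair (f := fun s => Int.fract (x s)) hij]
  exact Finset.sum_le_sum_of_subset_of_nonneg (Finset.subset_univ _)
    fun s _ _ => Int.fract_nonneg _

theorem fract_pred_mul {q : ℚ} (hq : ¬ ∃ z : ℤ, q = z) {N : ℕ} (hN : 0 < N) (hd : q.den ∣ N) :
    Int.fract (((N - 1 : ℕ) : ℚ) * q) = 1 - Int.fract q := by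
  obtain ⟨k, rfl⟩ := hd
  have hne : Int.fract q ≠ 0 := fun h => by
    obtain ⟨z, hz⟩ := Int.fract_eq_zero_iff.1 h
    exact hq ⟨z, hz.symm⟩
  have e : ((q.den * k - 1 : ℕ) : ℚ) * q = -q + ((k * q.num : ℤ) : ℚ) := by
    rw [Nat.cast_pred hN]
    push_cast
    linear_combination (k : ℚ) * Rat.den_mul_eq_num q
  rw [e, Int.fract_add_intCast, Int.fract_neg hne]

/-- For nonnegative rationals `a₀, …, a_r`, the equality
`⌊n·(a₀ + ⋯ + a_r)⌋ = ⌊n·a₀⌋ + ⋯ + ⌊n·a_r⌋` holds for every natural number `n`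
if and only if at most one of the `aₛ` is not an integer. -/
theorem stmt_1 (r : ℕ) (a : Fin (r + 1) → ℚ) (ha : ∀ s, 0 ≤ a s) :
    (∀ n : ℕ, ⌊(n : ℚ) * ∑ s, a s⌋ = ∑ s, ⌊(n : ℚ) * a s⌋) ↔
      {s : Fin (r + 1) | ¬ ∃ z : ℤ, a s = z}.Subsingleton := by
  simp only [Finset.mul_sum, floor_sum_eq_iff]
  constructor
  · intro h i hi j hj
    by_contra hij
    have hN : 0 < (a i).den * (a j).den := Nat.mul_pos (a i).den_pos (a j).den_pos
    have h1 := (fract_add_fract_le_sum (fun s => ((1 : ℕ) : ℚ) * a s) hij).trans_lt (h 1)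
    have h2 := (fract_add_fract_le_sum
      (fun s => (((a i).den * (a j).den - 1 : ℕ) : ℚ) * a s) hij).trans_lt (h _)
    simp only [Nat.cast_one, one_mul] at h1
    simp only [fract_pred_mul hi hN (Nat.dvd_mul_right _ _),
      fract_pred_mul hj hN (Nat.dvd_mul_left _ _)] at h2
    linarith
  · intro h n
    have hint : ∀ s, (∃ z : ℤ, a s = z) → Int.fract ((n : ℚ) * a s) = 0 := by
      rintro s ⟨z, hz⟩
      exact Int.fract_eq_zero_iff.2 ⟨n * z, by rw [hz]; push_cast; rfl⟩
    by_cases hex : ∃ i, ¬ ∃ z : ℤ, a i = z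
    · obtain ⟨i, hi⟩ := hex
      rw [Finset.sum_eq_single i]
      · exact Int.fract_lt_one _
      · intro s _ hs
        exact hint s (by_contra fun hc => hs (h hc hi))
      · simp
    · push Not at hex
      rw [Finset.sum_eq_zero fun s _ => hint s (hex s)]
      exact one_pos
end
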